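/- Let C be an [n,k] linear code over F_q. Then for every 1 ≤ i ≤ k, the i-th CEZ greedy weight of C equals the i-th CEZ greedy weight of its matroid M_C: g_i(C) = g_i(M_C). -/

import Mathlib

open Finset
open scoped Classical

noncomputable section

/-- The rank in the matroid `M_C`: `r(X)` is the rank of the column submatrix `H_X`. -/
def colRank {F : Type*} [Field F] {m n : ℕ} (H : Matrix (Fin m) (Fin n) F)
    (X : Finset (Fin n)) : ℕ :=
  Module.finrank F (Submodule.span F ((fun j i => H i j) '' (X : Set (Fin n))))

/-- The nullity function of the matroid `M_C`: `n(X) = |X| - r(X)`. -/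
def nulC {F : Type*} [Field F] {m n : ℕ} (H : Matrix (Fin m) (Fin n) F)
    (X : Finset (Fin n)) : ℕ :=
  X.card - colRank H X

/-- The support of a word. -/
def supp {F : Type*} [Field F] {n : ℕ} (c : Fin n → F) : Finset (Fin n) :=
  Finset.univ.filter (fun i => c i ≠ 0)

/-- The support of a subcode. -/
def suppD {F : Type*} [Field F] {n : ℕ} (D : Submodule F (Fin n → F)) : Finset (Fin n) :=
  Finset.univ.filter (fun i => ∃ c ∈ D, c i ≠ 0)

/-- The weight of a subcode: the cardinality of its support. -/
def wt {F : Type*} [Field F] {n : ℕ} (D : Submodule F (Fin n → F)) : ℕ := (suppD D).card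

/-- The subcode `C(X) = {c ∈ C : Supp(c) ⊆ X}`. -/
def codeRestrict {F : Type*} [Field F] {n : ℕ} (C : Submodule F (Fin n → F))
    (X : Finset (Fin n)) : Submodule F (Fin n → F) where
  carrier := {c | c ∈ C ∧ ∀ i ∉ X, c i = 0}
  add_mem' := by
    rintro a b ⟨ha, ha0⟩ ⟨hb, hb0⟩
    exact ⟨C.add_mem ha hb, fun i hi => by simp [Pi.add_apply, ha0 i hi, hb0 i hi]⟩
  zero_mem' := ⟨C.zero_mem, fun i _ => rfl⟩
  smul_mem' := by
    rintro r a ⟨ha, ha0⟩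
    exact ⟨C.smul_mem r ha, fun i hi => by simp [Pi.smul_apply, ha0 i hi]⟩

/-- The code defined by the parity check matrix `H`: `C = {x : H x = 0}`. -/
def codeOf {F : Type*} [Field F] {m n : ℕ} (H : Matrix (Fin m) (Fin n) F) :
    Submodule F (Fin n → F) :=
  LinearMap.ker H.mulVecLin

/-- The `r`-th generalized Hamming weight of a code `C`. -/
def dC {F : Type*} [Field F] {n : ℕ} (C : Submodule F (Fin n → F)) (r : ℕ) : ℕ :=
  sInf {w | ∃ D : Submodule F (Fin n → F), D ≤ C ∧ Module.finrank F D = r ∧ wt D = w}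

/-- `D` computes `d_r(C)`: `D ⊆ C`, `dim D = r` and `wt(D) = d_r(C)`. -/
def Computes {F : Type*} [Field F] {n : ℕ} (C : Submodule F (Fin n → F)) (r : ℕ)
    (D : Submodule F (Fin n → F)) : Prop :=
  D ≤ C ∧ Module.finrank F D = r ∧ wt D = dC C r

end
noncomputable section

/-- `D` is a CEZ greedy `i`-subcode of `C`: for `i = 1` a `1`-dimensional subcode of minimal
weight; for `i ≥ 2` an `i`-dimensional subcode containing some subcode computing `d_{i-1}(C)`,
of minimal weight among all such. -/
def IsCEZ {F : Type*} [Field F] {n : ℕ} (C : Submodule F (Fin n → F)) (i : ℕ)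
    (D : Submodule F (Fin n → F)) : Prop :=
  if i ≤ 1 then
    D ≤ C ∧ Module.finrank F D = 1 ∧
      ∀ D₂ ≤ C, Module.finrank F D₂ = 1 → wt D ≤ wt D₂
  else
    D ≤ C ∧ Module.finrank F D = i ∧ (∃ D', Computes C (i - 1) D' ∧ D' ≤ D) ∧
      ∀ D₂ ≤ C, Module.finrank F D₂ = i →
        (∃ D'', Computes C (i - 1) D'' ∧ D'' ≤ D₂) → wt D ≤ wt D₂

/-- The generalized Hamming weights of the matroid `M_C`. -/
def dM {F : Type*} [Field F] {m n : ℕ} (H : Matrix (Fin m) (Fin n) F) (i : ℕ) : ℕ :=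
  sInf {c | ∃ X, nulC H X = i ∧ X.card = c}

/-- The CEZ greedy weights of the matroid `M_C`: `g_1 = d_1` and for `i ≥ 2`,
`g_i = min {|σ| : σ ∈ 𝒩_i, ∃ τ ∈ 𝒩_{i-1}, τ ⊆ σ, |τ| = d_{i-1}}`. -/
def gM {F : Type*} [Field F] {m n : ℕ} (H : Matrix (Fin m) (Fin n) F) (i : ℕ) : ℕ :=
  if i ≤ 1 then dM H 1
  else sInf {c | ∃ X, nulC H X = i ∧
    (∃ Y, nulC H Y = i - 1 ∧ Y ⊆ X ∧ Y.card = dM H (i - 1)) ∧ X.card = c}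

lemma colRank_mono {F : Type*} [Field F] {m n : ℕ} (H : Matrix (Fin m) (Fin n) F)
    {X Y : Finset (Fin n)} (h : X ⊆ Y) : colRank H X ≤ colRank H Y := by
  unfold colRank
  apply Submodule.finrank_mono
  apply Submodule.span_mono
  apply Set.image_mono
  exact_mod_cast h

lemma colRank_le_card {F : Type*} [Field F] {m n : ℕ} (H : Matrix (Fin m) (Fin n) F)
    (X : Finset (Fin n)) : colRank H X ≤ X.card := by
  unfold colRank
  rw [← Finset.coe_image]
  exact (finrank_span_finset_le_card _).trans Finset.card_image_le

lemma nulC_eq {F : Type*} [Field F] {m n : ℕ} (H : Matrix (Fin m) (Fin n) F)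
    (X : Finset (Fin n)) : nulC H X = Module.finrank F (codeRestrict (codeOf H) X) := by
  let f : (X → F) →ₗ[F] (Fin m → F) :=
    Fintype.linearCombination F (fun j : X => fun i => H i j)
  let e : (X → F) →ₗ[F] (Fin n → F) :=
    Function.ExtendByZero.linearMap F (Subtype.val : X → Fin n)
  have hev : ∀ (x : X → F) (j : X), e x j = x j := by
    intro x j
    exact Subtype.val_injective.extend_apply _ _ _
  have hev0 : ∀ (x : X → F) (j : Fin n), j ∉ X → e x j = 0 := by
    intro x j hj
    refine Function.extend_apply' _ _ _ ?_
    rintro ⟨a, rfl⟩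
    exact hj a.2
  have he : Function.Injective e := by
    intro x y hxy
    funext j
    rw [← hev x j, ← hev y j, hxy]
  have hfe : ∀ x, f x = H.mulVecLin (e x) := by
    intro x
    funext i
    simp only [f, Fintype.linearCombination_apply, Finset.sum_apply, Pi.smul_apply, smul_eq_mul,
      Matrix.mulVecLin_apply, Matrix.mulVec, dotProduct]
    rw [← Finset.sum_subset (Finset.subset_univ X) (fun j _ hj => by rw [hev0 x j hj, mul_zero]),
      ← Finset.sum_coe_sort X]
    exact Finset.sum_congr rfl fun j _ => by rw [hev, mul_comm]
  have hmap : (LinearMap.ker f).map e = codeRestrict (codeOf H) X := by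
    ext c
    constructor
    · rintro ⟨x, hx, rfl⟩
      refine ⟨?_, fun j hj => hev0 x j hj⟩
      change H.mulVecLin (e x) = 0
      rw [← hfe]; exact hx
    · rintro ⟨hc, h0⟩
      have hec : e (fun j => c j) = c := by
        funext j
        by_cases hj : j ∈ X
        · exact hev (fun j => c j) ⟨j, hj⟩
        · rw [hev0 _ j hj, h0 j hj]
      refine ⟨fun j => c j, ?_, hec⟩
      change f _ = 0
      rw [hfe, hec]; exact hc
  have hr : Module.finrank F (LinearMap.range f) = colRank H X := by
    unfold colRank
    have hs : Set.range (fun j : X => fun i => H i j) =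
        (fun j i => H i j) '' (X : Set (Fin n)) := by
      ext v
      simp
    rw [Fintype.range_linearCombination, hs]
  have h1 := LinearMap.finrank_range_add_finrank_ker f
  have h2 := (Submodule.equivMapOfInjective e he (LinearMap.ker f)).finrank_eq.symm
  rw [Module.finrank_fintype_fun_eq_card, Fintype.card_coe, hr] at h1
  unfold nulC
  rw [← hmap, h2]
  omega

lemma nulC_mono {F : Type*} [Field F] {m n : ℕ} (H : Matrix (Fin m) (Fin n) F)
    {X Y : Finset (Fin n)} (h : X ⊆ Y) : nulC H X ≤ nulC H Y := by
  rw [nulC_eq, nulC_eq]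
  apply Submodule.finrank_mono
  rintro c ⟨hc, h0⟩
  exact ⟨hc, fun i hi => h0 i fun hx => hi (h hx)⟩

lemma nulC_erase {F : Type*} [Field F] {m n : ℕ} (H : Matrix (Fin m) (Fin n) F)
    (X : Finset (Fin n)) (a : Fin n) (ha : a ∈ X) : nulC H X ≤ nulC H (X.erase a) + 1 := by
  have h1 := colRank_mono H (Finset.erase_subset a X)
  have h2 := colRank_le_card H (X.erase a)
  have h3 := Finset.card_erase_add_one ha
  unfold nulC
  omega

lemma nulC_interp {F : Type*} [Field F] {m n : ℕ} (H : Matrix (Fin m) (Fin n) F)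
    (Y : Finset (Fin n)) (j : ℕ) (hY : nulC H Y ≤ j) :
    ∀ (s : ℕ) (X : Finset (Fin n)), X.card = s → Y ⊆ X → j ≤ nulC H X →
      ∃ Z, Y ⊆ Z ∧ Z ⊆ X ∧ nulC H Z = j := by
  intro s
  induction s with
  | zero =>
    intro X hX hYX hj
    have hX0 := Finset.card_eq_zero.mp hX
    subst hX0
    have : nulC H (∅ : Finset (Fin n)) = 0 := by simp [nulC]
    exact ⟨∅, hYX, subset_rfl, by omega⟩
  | succ s ih =>
    intro X hX hYX hj
    by_cases hlt : nulC H X = j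
    · exact ⟨X, hYX, subset_rfl, hlt⟩
    have hne : ¬ X ⊆ Y := by
      intro h
      have := nulC_mono H h
      omega
    obtain ⟨a, ha, haY⟩ := Finset.not_subset.mp hne
    have h3 := Finset.card_erase_add_one ha
    have h4 := nulC_erase H X a ha
    obtain ⟨Z, h5, h6, h7⟩ := ih (X.erase a) (by omega)
      (fun y hy => Finset.mem_erase.mpr ⟨fun h => haY (h ▸ hy), hYX hy⟩) (by omega)
    exact ⟨Z, h5, h6.trans (Finset.erase_subset _ _), h7⟩

lemma suppD_codeRestrict {F : Type*} [Field F] {n : ℕ} (C : Submodule F (Fin n → F))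
    (X : Finset (Fin n)) : suppD (codeRestrict C X) ⊆ X := by
  intro i hi
  obtain ⟨c, hc, h⟩ := (Finset.mem_filter.mp hi).2
  by_contra hx
  exact h (hc.2 i hx)

lemma suppD_mono {F : Type*} [Field F] {n : ℕ} {D E : Submodule F (Fin n → F)}
    (h : D ≤ E) : suppD D ⊆ suppD E := by
  intro i hi
  obtain ⟨c, hc, h1⟩ := (Finset.mem_filter.mp hi).2
  exact Finset.mem_filter.mpr ⟨Finset.mem_univ _, c, h hc, h1⟩

lemma codeRestrict_le {F : Type*} [Field F] {n : ℕ} (C : Submodule F (Fin n → F))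
    (X : Finset (Fin n)) : codeRestrict C X ≤ C := fun _ hc => hc.1

lemma wt_codeRestrict {F : Type*} [Field F] {n : ℕ} (C : Submodule F (Fin n → F))
    (X : Finset (Fin n)) : wt (codeRestrict C X) ≤ X.card :=
  Finset.card_le_card (suppD_codeRestrict C X)

lemma le_nulC_suppD {F : Type*} [Field F] {m n : ℕ} (H : Matrix (Fin m) (Fin n) F)
    (D : Submodule F (Fin n → F)) (hD : D ≤ codeOf H) :
    Module.finrank F D ≤ nulC H (suppD D) := by
  rw [nulC_eq]
  apply Submodule.finrank_mono
  intro c hc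
  refine ⟨hD hc, fun i hi => ?_⟩
  by_contra h
  exact hi (Finset.mem_filter.mpr ⟨Finset.mem_univ _, c, hc, h⟩)

lemma sInf_eq_of_cofinal {S T : Set ℕ} (h1 : ∀ s ∈ S, ∃ t ∈ T, t ≤ s)
    (h2 : ∀ t ∈ T, ∃ s ∈ S, s ≤ t) : sInf S = sInf T := by
  rcases S.eq_empty_or_nonempty with rfl | hS
  · have : T = ∅ := by
      ext t
      simp only [Set.mem_empty_iff_false, iff_false]
      intro ht
      obtain ⟨s, hs, _⟩ := h2 t ht
      exact hs
    rw [this]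
  · obtain ⟨t, ht, h3⟩ := h1 _ (Nat.sInf_mem hS)
    obtain ⟨s, hs, h4⟩ := h2 _ (Nat.sInf_mem ⟨t, ht⟩)
    exact le_antisymm ((Nat.sInf_le hs).trans h4) ((Nat.sInf_le ht).trans h3)

lemma exists_subset_nul {F : Type*} [Field F] {m n : ℕ} (H : Matrix (Fin m) (Fin n) F)
    (X : Finset (Fin n)) (j : ℕ) (hj : j ≤ nulC H X) : ∃ Z, Z ⊆ X ∧ nulC H Z = j := by
  obtain ⟨Z, _, h1, h2⟩ := nulC_interp H ∅ j (by simp [nulC]) _ X rfl (Finset.empty_subset _) hj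
  exact ⟨Z, h1, h2⟩

lemma dC_eq_dM {F : Type*} [Field F] {m n : ℕ} (H : Matrix (Fin m) (Fin n) F) (j : ℕ) :
    dC (codeOf H) j = dM H j := by
  apply sInf_eq_of_cofinal
  · rintro w ⟨D, hD, hj, rfl⟩
    obtain ⟨Z, h1, h2⟩ := exists_subset_nul H (suppD D) j (hj ▸ le_nulC_suppD H D hD)
    exact ⟨_, ⟨Z, h2, rfl⟩, Finset.card_le_card h1⟩
  · rintro w ⟨X, hX, rfl⟩
    exact ⟨_, ⟨_, codeRestrict_le _ X, (nulC_eq H X).symm.trans hX, rfl⟩, wt_codeRestrict _ X⟩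

lemma nulC_of_min {F : Type*} [Field F] {m n : ℕ} (H : Matrix (Fin m) (Fin n) F) (j : ℕ)
    (X : Finset (Fin n)) (hX : X.card = dM H j) (hj : j ≤ nulC H X) : nulC H X = j := by
  obtain ⟨Z, h1, h2⟩ := exists_subset_nul H X j hj
  have h3 : dM H j ≤ Z.card := Nat.sInf_le ⟨Z, h2, rfl⟩
  have : Z = X := Finset.eq_of_subset_of_card_le h1 (by omega)
  rw [← this, h2]

/-- the CEZ greedy weights of an `[n,k]` code `C` coincide with the CEZ greedy
weights of its matroid `M_C`: the weight of any CEZ greedy `i`-subcode of `C` is `g_i(M_C)`. -/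
theorem statement14 {F : Type*} [Field F] [Fintype F] {m k n : ℕ} (hmk : m + k = n)
    (H : Matrix (Fin m) (Fin n) F) (hH : H.rank = m)
    (i : ℕ) (hi1 : 1 ≤ i) (hik : i ≤ k)
    (D : Submodule F (Fin n → F)) (hD : IsCEZ (codeOf H) i D) :
    wt D = gM H i := by
  unfold IsCEZ at hD
  unfold gM
  split_ifs at hD ⊢ with hi
  · obtain ⟨h1, h2, h3⟩ := hD
    rw [← dC_eq_dM]
    apply le_antisymm
    · obtain ⟨E, hE, hE1, hE2⟩ := Nat.sInf_mem (s := {w | ∃ D : Submodule F (Fin n → F),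
        D ≤ codeOf H ∧ Module.finrank F D = 1 ∧ wt D = w}) ⟨_, D, h1, h2, rfl⟩
      exact (h3 E hE hE1).trans hE2.le
    · exact Nat.sInf_le ⟨D, h1, h2, rfl⟩
  · obtain ⟨h1, h2, ⟨D', ⟨ha, hb, hc⟩, hle⟩, h3⟩ := hD
    rw [dC_eq_dM] at hc
    have hY : nulC H (suppD D') = i - 1 :=
      nulC_of_min H (i - 1) (suppD D') hc (hb ▸ le_nulC_suppD H D' ha)
    obtain ⟨Z, hZ1, hZ2, hZ3⟩ := nulC_interp H (suppD D') i (by omega) _ (suppD D) rfl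
      (suppD_mono hle) (h2 ▸ le_nulC_suppD H D h1)
    have hmem : Z.card ∈ {c | ∃ X, nulC H X = i ∧
        (∃ Y, nulC H Y = i - 1 ∧ Y ⊆ X ∧ Y.card = dM H (i - 1)) ∧ X.card = c} :=
      ⟨Z, hZ3, ⟨_, hY, hZ1, hc⟩, rfl⟩
    apply le_antisymm
    · obtain ⟨X, hX, ⟨Y, hY1, hY2, hY3⟩, hXc⟩ := Nat.sInf_mem ⟨_, hmem⟩
      rw [← hXc]
      refine (h3 (codeRestrict (codeOf H) X) (codeRestrict_le _ X)
        ((nulC_eq H X).symm.trans hX) ⟨codeRestrict (codeOf H) Y, ⟨codeRestrict_le _ Y,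
          (nulC_eq H Y).symm.trans hY1, le_antisymm ?_ ?_⟩, ?_⟩).trans (wt_codeRestrict _ X)
      · rw [dC_eq_dM, ← hY3]
        exact wt_codeRestrict _ Y
      · exact Nat.sInf_le ⟨_, codeRestrict_le _ Y, (nulC_eq H Y).symm.trans hY1, rfl⟩
      · rintro c ⟨hc1, hc2⟩
        exact ⟨hc1, fun l hl => hc2 l fun h => hl (hY2 h)⟩
    · exact (Nat.sInf_le hmem).trans (Finset.card_le_card hZ2)

end
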